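/- arXiv:2506.07071 — 3 statements merged into one kernel-verified Lean document; each statement's English description precedes it below -/
import Mathlib

section
/- Let (E,𝒞,r) be a semimatroid. Then T(𝒞; t, s) = Σ_{X ∈ ℒ(𝒞)} T(𝒞|X; 0, s) · T(𝒞/X; t, 0), where the sum is over all flats X of 𝒞; moreover T(𝒞; t, s) = Σ_X T(𝒞|X; 0, s) · T(𝒞/X; t, 0), where this second sum ranges only over the cyclic flats X of 𝒞 (flats X such that the restriction 𝒞|X has no bridges). -/
open scoped Classical

/-- A semimatroid on a finite ground set `E`: a nonempty, subset-closed collection `C`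
of "central" subsets of `E`, together with a rank function `r` satisfying (SR1)-(SR5). -/
structure Semimatroid (E : Type*) [DecidableEq E] [Fintype E] where
  C : Finset (Finset E)
  r : Finset E → ℕ
  C_nonempty : C.Nonempty
  mem_of_subset : ∀ ⦃X Y : Finset E⦄, X ∈ C → Y ⊆ X → Y ∈ C
  r_le_card : ∀ ⦃X : Finset E⦄, X ∈ C → r X ≤ X.card
  r_mono : ∀ ⦃X Y : Finset E⦄, X ∈ C → Y ∈ C → X ⊆ Y → r X ≤ r Y
  submodular : ∀ ⦃X Y : Finset E⦄, X ∈ C → Y ∈ C → X ∪ Y ∈ C →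
    r (X ∩ Y) + r (X ∪ Y) ≤ r X + r Y
  union_mem : ∀ ⦃X Y : Finset E⦄, X ∈ C → Y ∈ C → r X = r (X ∩ Y) → X ∪ Y ∈ C
  augment : ∀ ⦃X Y : Finset E⦄, X ∈ C → Y ∈ C → r X < r Y →
    ∃ e ∈ Y \ X, insert e X ∈ C

namespace Semimatroid

variable {E : Type*} [DecidableEq E] [Fintype E] (S : Semimatroid E)

/-- The rank `r(𝒞)` of the semimatroid: the common rank of the maximal central sets. -/
def rank : ℕ := S.C.sup S.r

/-- The closure of a central set `X`:
`cl X = {e ∈ E : X ∪ {e} ∈ 𝒞 and r (X ∪ {e}) = r X}`. -/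
def cl (X : Finset E) : Finset E :=
  Finset.univ.filter fun e => insert e X ∈ S.C ∧ S.r (insert e X) = S.r X

/-- The flats of the semimatroid: central sets `X` with `cl X = X`. -/
def flats : Finset (Finset E) := S.C.filter fun X => S.cl X = X

/-- The characteristic polynomial `χ(𝒞;t) = Σ_{X ∈ 𝒞} (−1)^{|X|} t^{r(𝒞)−r(X)}`. -/
noncomputable def charPoly : Polynomial ℤ :=
  ∑ A ∈ S.C, (-1 : Polynomial ℤ) ^ A.card * Polynomial.X ^ (S.rank - S.r A)

end Semimatroid

namespace Semimatroid

variable {E : Type*} [DecidableEq E] [Fintype E] (S : Semimatroid E)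

/-- The Tutte polynomial of `𝒞` evaluated at `(t,s)`:
`T(𝒞;t,s) = Σ_{A ∈ 𝒞} (t−1)^{r(𝒞)−r(A)} (s−1)^{|A|−r(A)}`. -/
def tutteEval (t s : ℤ) : ℤ :=
  ∑ A ∈ S.C, (t - 1) ^ (S.rank - S.r A) * (s - 1) ^ (A.card - S.r A)

/-- The central sets of the restriction `𝒞|X`: `{Y ⊆ X : Y ∈ 𝒞}`. -/
def restCentrals (X : Finset E) : Finset (Finset E) := S.C.filter fun Y => Y ⊆ X

/-- The rank of the restriction `𝒞|X`. -/
def restRank (X : Finset E) : ℕ := (S.restCentrals X).sup S.r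

/-- The Tutte polynomial of the restriction `𝒞|X`, evaluated at `(t,s)`. -/
def restTutteEval (X : Finset E) (t s : ℤ) : ℤ :=
  ∑ Y ∈ S.restCentrals X,
    (t - 1) ^ (S.restRank X - S.r Y) * (s - 1) ^ (Y.card - S.r Y)

/-- The central sets of the contraction `𝒞/X`: `{Y ⊆ E \ X : Y ∪ X ∈ 𝒞}`. -/
def contrCentrals (X : Finset E) : Finset (Finset E) :=
  (Finset.univ \ X).powerset.filter fun Y => Y ∪ X ∈ S.C

/-- The rank of the contraction `𝒞/X`, whose rank function is `Y ↦ r(Y ∪ X) − r(X)`. -/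
def contrRank (X : Finset E) : ℕ :=
  (S.contrCentrals X).sup fun Y => S.r (Y ∪ X) - S.r X

/-- The Tutte polynomial of the contraction `𝒞/X`, evaluated at `(t,s)`. -/
def contrTutteEval (X : Finset E) (t s : ℤ) : ℤ :=
  ∑ Y ∈ S.contrCentrals X,
    (t - 1) ^ (S.contrRank X - (S.r (Y ∪ X) - S.r X)) *
      (s - 1) ^ (Y.card - (S.r (Y ∪ X) - S.r X))

/-- `B` is a basis of the restriction `𝒞|X`: a maximal independent central subset of `X`. -/
def RestBasis (X B : Finset E) : Prop :=
  B ∈ S.C ∧ B ⊆ X ∧ S.r B = B.card ∧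
    ∀ B' : Finset E, B' ∈ S.C → B' ⊆ X → S.r B' = B'.card → B ⊆ B' → B' = B

/-- An element `e ∈ X` is a bridge of the restriction `𝒞|X` if it lies in every basis. -/
def RestBridge (X : Finset E) (e : E) : Prop :=
  e ∈ X ∧ ∀ B : Finset E, S.RestBasis X B → e ∈ B

/-- The cyclic flats of `𝒞`: flats `X` such that `𝒞|X` has no bridges. -/
noncomputable def cyclicFlats : Finset (Finset E) :=
  S.flats.filter fun X => ¬ ∃ e : E, S.RestBridge X e

end Semimatroid

namespace Semimatroid

variable {E : Type*} [DecidableEq E] [Fintype E] (S : Semimatroid E)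

/-- A signed sum over a family of sets closed under toggling `e` vanishes. -/
lemma sum_toggle_zero (P : Finset (Finset E)) (f : Finset E → ℤ) (e : E)
    (h1 : ∀ Y ∈ P, e ∉ Y → insert e Y ∈ P) (h2 : ∀ Y ∈ P, e ∈ Y → Y.erase e ∈ P)
    (h3 : ∀ Y ∈ P, e ∉ Y → f (insert e Y) = - f Y) : ∑ Y ∈ P, f Y = 0 := by
  refine Finset.sum_involution (fun Y _ => if e ∈ Y then Y.erase e else insert e Y) ?_ ?_ ?_ ?_
  · intro Y hY
    by_cases he : e ∈ Y
    · have := h3 _ (h2 Y hY he) (Finset.notMem_erase e Y)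
      rw [Finset.insert_erase he] at this
      simp [he, this]
    · simp [he, h3 Y hY he]
  · intro Y hY _
    by_cases he : e ∈ Y
    · simp only [he, if_true]
      intro h
      exact Finset.notMem_erase e Y (h.symm.subset he)
    · simp only [he, if_false]
      intro h
      exact he (h ▸ Finset.mem_insert_self e Y)
  · intro Y hY
    by_cases he : e ∈ Y
    · simpa [he] using h2 Y hY he
    · simpa [he] using h1 Y hY he
  · intro Y hY
    by_cases he : e ∈ Y
    · simp [he]
    · simp [he]

lemma r_union_le {X Y : Finset E} (h : Y ∪ X ∈ S.C) : S.r (Y ∪ X) ≤ S.r X + Y.card := by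
  have hX : X ∈ S.C := S.mem_of_subset h Finset.subset_union_right
  have hY : Y ∈ S.C := S.mem_of_subset h Finset.subset_union_left
  have := S.submodular hY hX h
  have := S.r_le_card hY
  omega

lemma restCentrals_eq {X : Finset E} (hX : X ∈ S.C) : S.restCentrals X = X.powerset := by
  ext Y
  simp only [restCentrals, Finset.mem_filter, Finset.mem_powerset]
  exact ⟨fun h => h.2, fun h => ⟨S.mem_of_subset hX h, h⟩⟩

lemma restRank_eq {X : Finset E} (hX : X ∈ S.C) : S.restRank X = S.r X := by
  unfold restRank
  rw [S.restCentrals_eq hX]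
  apply le_antisymm
  · apply Finset.sup_le
    intro Y hY
    rw [Finset.mem_powerset] at hY
    exact S.r_mono (S.mem_of_subset hX hY) hX hY
  · exact Finset.le_sup (f := S.r) (Finset.mem_powerset_self X)

lemma r_le_rank {X : Finset E} (hX : X ∈ S.C) : S.r X ≤ S.rank := Finset.le_sup hX

lemma exists_max {X : Finset E} (hX : X ∈ S.C) : ∃ Z ∈ S.C, X ⊆ Z ∧ S.r Z = S.rank := by
  obtain ⟨Z, hZ, hmax⟩ := Finset.exists_max_image (S.C.filter fun Z => X ⊆ Z) Finset.card
    ⟨X, by simp [hX]⟩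
  rw [Finset.mem_filter] at hZ
  refine ⟨Z, hZ.1, hZ.2, le_antisymm (S.r_le_rank hZ.1) ?_⟩
  apply Finset.sup_le
  intro Y hY
  by_contra hlt
  obtain ⟨e, he, hi⟩ := S.augment hZ.1 hY (not_le.1 hlt)
  have := hmax (insert e Z)
    (Finset.mem_filter.2 ⟨hi, hZ.2.trans (Finset.subset_insert e Z)⟩)
  rw [Finset.card_insert_of_notMem (Finset.mem_sdiff.1 he).2] at this
  omega

lemma mem_contrCentrals {X Y : Finset E} :
    Y ∈ S.contrCentrals X ↔ Disjoint Y X ∧ Y ∪ X ∈ S.C := by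
  simp only [contrCentrals, Finset.mem_filter, Finset.mem_powerset, Finset.subset_sdiff,
    Finset.subset_univ, true_and]

lemma contrRank_eq {X : Finset E} (hX : X ∈ S.C) : S.contrRank X = S.rank - S.r X := by
  apply le_antisymm
  · apply Finset.sup_le
    intro Y hY
    have := S.r_le_rank (S.mem_contrCentrals.1 hY).2
    omega
  · obtain ⟨Z, hZ, hXZ, hr⟩ := S.exists_max hX
    have hm : Z \ X ∈ S.contrCentrals X := by
      rw [mem_contrCentrals, Finset.sdiff_union_of_subset hXZ]
      exact ⟨Finset.sdiff_disjoint, hZ⟩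
    have := Finset.le_sup (f := fun Y => S.r (Y ∪ X) - S.r X) hm
    simp only [Finset.sdiff_union_of_subset hXZ, hr] at this
    exact this

lemma contr_zero {X : Finset E} (hX : X ∈ S.C) (hf : X ∉ S.flats) (t : ℤ) :
    S.contrTutteEval X t 0 = 0 := by
  have hne : S.cl X ≠ X := fun h => hf (Finset.mem_filter.2 ⟨hX, h⟩)
  have hsub : X ⊆ S.cl X := fun e he => by
    simp [cl, Finset.insert_eq_of_mem he, hX]
  obtain ⟨e, he, heX⟩ := Finset.exists_of_ssubset (hsub.ssubset_of_ne hne.symm)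
  obtain ⟨hC, hr⟩ : insert e X ∈ S.C ∧ S.r (insert e X) = S.r X := by simpa [cl] using he
  have key : ∀ Y, Y ∪ X ∈ S.C → insert e Y ∪ X ∈ S.C ∧ S.r (insert e Y ∪ X) = S.r (Y ∪ X) := by
    intro Y hY
    have hi : S.r X ≤ S.r (insert e X ∩ (Y ∪ X)) := by
      apply S.r_mono hX (S.mem_of_subset hC Finset.inter_subset_left)
      intro x hx; simp [hx]
    have hi2 := S.r_mono (S.mem_of_subset hC Finset.inter_subset_left) hC
      (Finset.inter_subset_left (s₁ := insert e X) (s₂ := Y ∪ X))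
    have hu := S.union_mem hC hY (by omega)
    have hs := S.submodular hC hY hu
    have heq : insert e X ∪ (Y ∪ X) = insert e Y ∪ X := by
      ext x; simp; tauto
    rw [heq] at hu hs
    refine ⟨hu, le_antisymm (by omega) (S.r_mono hY hu ?_)⟩
    intro x; simp; tauto
  unfold contrTutteEval
  apply sum_toggle_zero _ _ e
  · intro Y hY heY
    rw [mem_contrCentrals] at hY ⊢
    exact ⟨by simp [heX, hY.1], (key Y hY.2).1⟩
  · intro Y hY heY
    rw [mem_contrCentrals] at hY ⊢
    exact ⟨hY.1.mono_left (Finset.erase_subset e Y), S.mem_of_subset hY.2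
      (Finset.union_subset_union_left (Finset.erase_subset e Y))⟩
  · intro Y hY heY
    rw [mem_contrCentrals] at hY
    have := S.r_union_le hY.2
    rw [(key Y hY.2).2, Finset.card_insert_of_notMem heY, Nat.sub_add_comm (by omega), pow_succ]
    ring

lemma exists_basis {X : Finset E} (hX : X ∈ S.C) :
    ∃ B ⊆ X, S.r B = B.card ∧ S.r B = S.r X := by
  induction X using Finset.induction_on with
  | empty => exact ⟨∅, subset_rfl, by have := S.r_le_card hX; simpa using this, rfl⟩
  | insert e X he ih =>
    have hX' := S.mem_of_subset hX (Finset.subset_insert e X)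
    obtain ⟨B, hB, h1, h2⟩ := ih hX'
    have hm := S.r_mono hX' hX (Finset.subset_insert e X)
    by_cases h : S.r (insert e X) = S.r X
    · exact ⟨B, hB.trans (Finset.subset_insert e X), h1, h2.trans h.symm⟩
    · have hs := Finset.insert_subset_insert e hB
      have hiC := S.mem_of_subset hX hs
      have hu : X ∪ insert e B = insert e X := by
        rw [Finset.union_insert, Finset.union_eq_left.2 hB]
      have hi : X ∩ insert e B = B := by
        rw [Finset.inter_insert_of_notMem he, Finset.inter_eq_right.2 hB]
      have hsub := S.submodular hX' hiC (by rw [hu]; exact hX)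
      rw [hu, hi] at hsub
      have hc := S.r_le_card hiC
      have hm2 := S.r_mono hiC hX hs
      rw [Finset.card_insert_of_notMem (fun h => he (hB h))] at hc
      have hle := S.r_union_le (X := X) (Y := {e}) (by simpa using hX)
      simp only [Finset.singleton_union, Finset.card_singleton] at hle
      refine ⟨insert e B, hs, ?_, by omega⟩
      rw [Finset.card_insert_of_notMem (fun h => he (hB h))]
      omega

lemma bridge_rank {X Y : Finset E} {e : E} (hX : X ∈ S.C) (hb : S.RestBridge X e)
    (hY : Y ⊆ X) (heY : e ∉ Y) : S.r (insert e Y) = S.r Y + 1 := by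
  have hiX : insert e Y ⊆ X := Finset.insert_subset hb.1 hY
  have hiC := S.mem_of_subset hX hiX
  have hYC := S.mem_of_subset hX hY
  have hle := S.r_union_le (X := Y) (Y := {e}) (by simpa using hiC)
  simp only [Finset.singleton_union, Finset.card_singleton] at hle
  have hm := S.r_mono hYC hiC (Finset.subset_insert e Y)
  by_contra hne
  have heC := S.mem_of_subset hX (Finset.erase_subset e X)
  have hu : X.erase e ∪ insert e Y = X := by
    ext x
    by_cases hx : x = e
    · simp [hx, hb.1]
    · simp only [Finset.mem_union, Finset.mem_erase, Finset.mem_insert, hx]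
      have := @hY x
      tauto
  have hi : X.erase e ∩ insert e Y = Y := by
    ext x
    by_cases hx : x = e
    · simp [hx, heY]
    · simp only [Finset.mem_inter, Finset.mem_erase, Finset.mem_insert, hx]
      have := @hY x
      tauto
  have hsub := S.submodular heC hiC (by rw [hu]; exact hX)
  rw [hu, hi] at hsub
  obtain ⟨B, hB, h1, h2⟩ := S.exists_basis heC
  have hBX := hB.trans (Finset.erase_subset e X)
  refine Finset.notMem_erase e X (hB (hb.2 B ⟨S.mem_of_subset hX hBX, hBX, h1, ?_⟩))
  intro B' hB' hB'X h hBB'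
  have := S.r_mono hB' hX hB'X
  exact (Finset.eq_of_subset_of_card_le hBB' (by omega)).symm

lemma rest_zero {X : Finset E} (hX : X ∈ S.C) (hb : ∃ e, S.RestBridge X e) (s : ℤ) :
    S.restTutteEval X 0 s = 0 := by
  obtain ⟨e, hb⟩ := hb
  unfold restTutteEval
  rw [S.restCentrals_eq hX, S.restRank_eq hX]
  apply sum_toggle_zero _ _ e
  · intro Y hY _
    rw [Finset.mem_powerset] at *
    exact Finset.insert_subset hb.1 hY
  · intro Y hY _
    rw [Finset.mem_powerset] at *
    exact (Finset.erase_subset e Y).trans hY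
  · intro Y hY heY
    rw [Finset.mem_powerset] at hY
    have h := S.bridge_rank hX hb hY heY
    have hi := Finset.insert_subset hb.1 hY
    have hm := S.r_mono (S.mem_of_subset hX hi) hX hi
    rw [h, Finset.card_insert_of_notMem heY, Nat.add_sub_add_right]
    have : S.r X - S.r Y = S.r X - (S.r Y + 1) + 1 := by omega
    rw [this, pow_succ]
    ring

lemma sum_interval {Y Z : Finset E} (hZ : Z ∈ S.C) :
    ∑ X ∈ S.C.filter (fun X => Y ⊆ X ∧ X ⊆ Z), (-1 : ℤ) ^ X.card =
      if Y = Z then (-1) ^ Z.card else 0 := by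
  split_ifs with h
  · subst h
    have : S.C.filter (fun X => Y ⊆ X ∧ X ⊆ Y) = {Y} := by
      ext X
      simp only [Finset.mem_filter, Finset.mem_singleton]
      exact ⟨fun h => h.2.2.antisymm h.2.1, fun h => by subst h; exact ⟨hZ, by simp⟩⟩
    rw [this, Finset.sum_singleton]
  · by_cases hYZ : Y ⊆ Z
    · obtain ⟨e, he, heY⟩ := Finset.exists_of_ssubset (hYZ.ssubset_of_ne h)
      apply sum_toggle_zero _ _ e
      · intro X hX _
        rw [Finset.mem_filter] at *
        have hi := Finset.insert_subset he hX.2.2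
        exact ⟨S.mem_of_subset hZ hi, hX.2.1.trans (Finset.subset_insert e X), hi⟩
      · intro X hX _
        rw [Finset.mem_filter] at *
        have hi := (Finset.erase_subset e X)
        exact ⟨S.mem_of_subset hX.1 hi, Finset.subset_erase.2 ⟨hX.2.1, heY⟩, hi.trans hX.2.2⟩
      · intro X _ heX
        rw [Finset.card_insert_of_notMem heX, pow_succ]
        ring
    · rw [Finset.filter_false_of_mem, Finset.sum_empty]
      exact fun X _ h => hYZ (h.1.trans h.2)

lemma contr_eq {X : Finset E} (hX : X ∈ S.C) (t : ℤ) :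
    S.contrTutteEval X t 0 = ∑ Z ∈ S.C.filter (fun Z => X ⊆ Z),
      (t - 1) ^ (S.rank - S.r Z) * (-1) ^ (Z.card + X.card + S.r Z + S.r X) := by
  unfold contrTutteEval
  rw [S.contrRank_eq hX]
  refine Finset.sum_nbij' (fun Y => Y ∪ X) (fun Z => Z \ X) ?_ ?_ ?_ ?_ ?_
  · intro Y hY
    rw [mem_contrCentrals] at hY
    exact Finset.mem_filter.2 ⟨hY.2, Finset.subset_union_right⟩
  · intro Z hZ
    rw [Finset.mem_filter] at hZ
    rw [mem_contrCentrals, Finset.sdiff_union_of_subset hZ.2]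
    exact ⟨Finset.sdiff_disjoint, hZ.1⟩
  · intro Y hY
    rw [mem_contrCentrals] at hY
    exact Finset.union_sdiff_cancel_right hY.1
  · intro Z hZ
    rw [Finset.mem_filter] at hZ
    exact Finset.sdiff_union_of_subset hZ.2
  · intro Y hY
    rw [mem_contrCentrals] at hY
    have h1 := S.r_union_le hY.2
    have h2 := S.r_mono hX hY.2 Finset.subset_union_right
    have h3 := S.r_le_rank hY.2
    rw [Finset.card_union_of_disjoint hY.1]
    congr 1
    · congr 1
      omega
    · rw [zero_sub, neg_one_pow_eq_pow_mod_two, neg_one_pow_eq_pow_mod_two (_ + _)]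
      congr 1
      omega

lemma rest_eq {X : Finset E} (hX : X ∈ S.C) (s : ℤ) :
    S.restTutteEval X 0 s = ∑ Y ∈ S.C.filter (fun Y => Y ⊆ X),
      (-1) ^ (S.r X + S.r Y) * (s - 1) ^ (Y.card - S.r Y) := by
  unfold restTutteEval
  rw [S.restRank_eq hX]
  refine Finset.sum_congr rfl ?_
  intro Y hY
  have hY := Finset.mem_filter.1 hY
  have := S.r_mono hY.1 hX hY.2
  congr 1
  rw [zero_sub, neg_one_pow_eq_pow_mod_two, neg_one_pow_eq_pow_mod_two (_ + _)]
  congr 1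
  omega

lemma full_sum (t s : ℤ) :
    ∑ X ∈ S.C, S.restTutteEval X 0 s * S.contrTutteEval X t 0 = S.tutteEval t s := by
  have h1 : ∀ X ∈ S.C, S.restTutteEval X 0 s * S.contrTutteEval X t 0 =
      ∑ Y ∈ S.C, ∑ Z ∈ S.C, if Y ⊆ X ∧ X ⊆ Z then
        ((-1) ^ (Z.card + S.r Z + S.r Y) * (s - 1) ^ (Y.card - S.r Y) *
          (t - 1) ^ (S.rank - S.r Z)) * (-1) ^ X.card else 0 := by
    intro X hX
    rw [S.rest_eq hX, S.contr_eq hX, Finset.sum_mul_sum, Finset.sum_filter]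
    refine Finset.sum_congr rfl fun Y _ => ?_
    rw [Finset.sum_filter]
    by_cases hY : Y ⊆ X
    · simp only [hY, if_true, true_and]
      refine Finset.sum_congr rfl fun Z _ => ?_
      split_ifs
      · have : (-1 : ℤ) ^ (S.r X + S.r Y) * (-1) ^ (Z.card + X.card + S.r Z + S.r X) =
          (-1) ^ (Z.card + S.r Z + S.r Y) * (-1) ^ X.card := by
          rw [← pow_add, ← pow_add, neg_one_pow_eq_pow_mod_two,
            neg_one_pow_eq_pow_mod_two (_ + X.card)]
          congr 1
          omega
        linear_combination ((s - 1) ^ (Y.card - S.r Y) * (t - 1) ^ (S.rank - S.r Z)) * this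
      · rfl
    · simp [hY]
  rw [Finset.sum_congr rfl h1, Finset.sum_comm]
  unfold tutteEval
  refine Finset.sum_congr rfl fun Y hY => ?_
  rw [Finset.sum_comm]
  have h2 : ∀ Z ∈ S.C, (∑ X ∈ S.C, if Y ⊆ X ∧ X ⊆ Z then
        ((-1) ^ (Z.card + S.r Z + S.r Y) * (s - 1) ^ (Y.card - S.r Y) *
          (t - 1) ^ (S.rank - S.r Z)) * (-1) ^ X.card else 0) =
      if Y = Z then (t - 1) ^ (S.rank - S.r Y) * (s - 1) ^ (Y.card - S.r Y) else 0 := by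
    intro Z hZ
    rw [← Finset.sum_filter, ← Finset.mul_sum, S.sum_interval hZ]
    split_ifs with h
    · subst h
      have : (-1 : ℤ) ^ (Y.card + S.r Y + S.r Y) * (-1) ^ Y.card = 1 := by
        rw [← pow_add]
        exact Even.neg_one_pow ⟨Y.card + S.r Y, by omega⟩
      linear_combination ((s - 1) ^ (Y.card - S.r Y) * (t - 1) ^ (S.rank - S.r Y)) * this
    · simp
  rw [Finset.sum_congr rfl h2, Finset.sum_ite_eq, if_pos hY]

end Semimatroid

/-- `T(𝒞;t,s) = Σ_{X ∈ ℒ(𝒞)} T(𝒞|X;0,s) T(𝒞/X;t,0)`, and moreover the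
sum may be restricted to the cyclic flats of `𝒞`. -/
theorem Semimatroid.tutte_convolution_flats
    {E : Type*} [DecidableEq E] [Fintype E] (S : Semimatroid E) :
    ∀ t s : ℤ,
      (S.tutteEval t s =
        ∑ X ∈ S.flats, S.restTutteEval X 0 s * S.contrTutteEval X t 0) ∧
      (S.tutteEval t s =
        ∑ X ∈ S.cyclicFlats, S.restTutteEval X 0 s * S.contrTutteEval X t 0) := by
  intro t s
  have hfl : S.tutteEval t s =
      ∑ X ∈ S.flats, S.restTutteEval X 0 s * S.contrTutteEval X t 0 := by
    rw [← S.full_sum]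
    symm
    refine Finset.sum_subset (Finset.filter_subset _ _) fun X hX hf => ?_
    rw [S.contr_zero hX hf, mul_zero]
  refine ⟨hfl, ?_⟩
  rw [hfl]
  symm
  refine Finset.sum_subset (Finset.filter_subset _ _) fun X hX hf => ?_
  have hC : X ∈ S.C := (Finset.mem_filter.1 hX).1
  have hb : ∃ e, S.RestBridge X e := by
    by_contra hb
    exact hf (Finset.mem_filter.2 ⟨hX, hb⟩)
  rw [S.rest_zero hC hb, zero_mul]
end

section
/- Let F be a field, n a positive integer, C a finite nonempty index set, and (α_e)_{e∈C} a family of vectors in F^n that is linearly dependent while every proper subfamily is linearly independent. Let (c_e)_{e∈C} be scalars in F with Σ_{e∈C} c_e α_e = 0 and c_e ≠ 0 for all e ∈ C. Then for every family (a_e)_{e∈C} of scalars in F, the family of vectors ((α_e, a_e))_{e∈C} in F^n × F is linearly dependent with every proper subfamily linearly independent if and only if Σ_{e∈C} c_e a_e = 0; moreover, if Σ_{e∈C} c_e a_e ≠ 0 then the whole family ((α_e, a_e))_{e∈C} is linearly independent. -/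
/-- Let `(α_e)_{e ∈ C}` be a circuit of vectors in `F^n` (linearly
dependent, every proper subfamily independent), with circuit vector `(c_e)` satisfying
`Σ c_e α_e = 0` and `c_e ≠ 0` for all `e`. Then for scalars `(a_e)`, the family
`((α_e, a_e))_{e ∈ C}` in `F^n × F` is dependent with every proper subfamily independent
iff `Σ c_e a_e = 0`; and if `Σ c_e a_e ≠ 0` then `((α_e, a_e))_{e ∈ C}` is independent. -/
theorem affine_circuit_iff_discriminantal
    (F : Type*) [Field F] (n : ℕ) (hn : 0 < n)
    (C : Type*) [Fintype C] [Nonempty C]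
    (α : C → (Fin n → F))
    (hdep : ¬ LinearIndependent F α)
    (hmin : ∀ s : Set C, s ≠ Set.univ → LinearIndependent F (fun e : s => α e.1))
    (c : C → F) (hc : ∀ e, c e ≠ 0) (hsum : ∑ e, c e • α e = 0)
    (a : C → F) :
    ((¬ LinearIndependent F (fun e => (α e, a e)) ∧
        ∀ s : Set C, s ≠ Set.univ →
          LinearIndependent F (fun e : s => (α e.1, a e.1))) ↔
      ∑ e, c e * a e = 0) ∧
    (∑ e, c e * a e ≠ 0 → LinearIndependent F (fun e => (α e, a e))) := by
  classical
  have key : ∀ g : C → F, ∑ e, g e • α e = 0 → ∀ e0, g e0 = 0 → ∀ e, g e = 0 := by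
    intro g hg e0 h0 e
    by_cases he : e = e0
    · rw [he, h0]
    have hne : ({e0}ᶜ : Set C) ≠ Set.univ := by
      intro h
      have : e0 ∈ ({e0}ᶜ : Set C) := h ▸ Set.mem_univ e0
      exact this rfl
    have hli := Fintype.linearIndependent_iff.1 (hmin _ hne) (fun e => g e.1)
    have hs : ∑ i : ({e0}ᶜ : Set C), g i.1 • α i.1 = 0 := by
      rw [← Finset.sum_subtype (Finset.univ.erase e0) (by simp) (fun e => g e • α e),
        ← hg]
      apply Finset.sum_erase
      simp [h0]
    exact hli hs ⟨e, he⟩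
  have indep : ∑ e, c e * a e ≠ 0 → LinearIndependent F (fun e => (α e, a e)) := by
    intro hne
    rw [Fintype.linearIndependent_iff]
    intro g hg
    have h1 : ∑ e, g e • α e = 0 := by
      have := congrArg Prod.fst hg
      simpa [Prod.fst_sum] using this
    have h2 : ∑ e, g e * a e = 0 := by
      have := congrArg Prod.snd hg
      simpa [Prod.snd_sum] using this
    obtain ⟨e0⟩ := ‹Nonempty C›
    have h3 := key (fun e => g e - (g e0 / c e0) * c e) (by
      simp only [sub_smul, mul_smul, Finset.sum_sub_distrib, ← Finset.smul_sum, h1, hsum]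
      simp) e0 (by simp [hc e0])
    have h4 : ∀ e, g e = (g e0 / c e0) * c e := fun e => sub_eq_zero.1 (h3 e)
    have h5 : (g e0 / c e0) * ∑ e, c e * a e = 0 := by
      rw [← h2, Finset.mul_sum]
      refine Finset.sum_congr rfl fun e _ => ?_
      rw [h4 e, mul_assoc]
    have h6 := (mul_eq_zero.1 h5).resolve_right hne
    intro e
    rw [h4 e, h6, zero_mul]
  refine ⟨⟨fun h => by_contra fun hne => h.1 (indep hne), fun h0 => ⟨fun hli => ?_, ?_⟩⟩, indep⟩
  · obtain ⟨e0⟩ := ‹Nonempty C›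
    refine hc e0 (Fintype.linearIndependent_iff.1 hli c ?_ e0)
    apply Prod.ext
    · simpa [Prod.fst_sum] using hsum
    · simpa [Prod.snd_sum] using h0
  · intro s hs
    exact LinearIndependent.of_comp (LinearMap.fst F (Fin n → F) F) (hmin s hs)
end

section
/- Let F be a field, E a finite set, n a positive integer, and (α_e)_{e∈E} vectors in F^n. For a : E → F, call a subset X ⊆ E a-central if there exists x ∈ F^n with ⟨α_e, x⟩ = a(e) for all e ∈ X, and define χ(𝒜_a;t) = Σ_{X a-central} (−1)^{|X|} t^{n − dim span{(α_e, a(e)) : e ∈ X}}; write w_i(𝒜_a) = (−1)^i · (coefficient of t^{n−i} in χ(𝒜_a;t)). Let a, a' : E → F. If every a'-central subset of E is also a-central, then w_i(𝒜_a) ≤ w_i(𝒜_{a'}) for every 0 ≤ i ≤ dim span{α_e : e ∈ E}. -/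
open scoped Classical

/-- `X ⊆ E` is a central subset of the affine arrangement
`𝒜_a = {x : ⟨α_e, x⟩ = a(e)}_{e ∈ E}`: the hyperplanes indexed by `X` have a common point. -/
def ACentral {F : Type*} [Field F] {E : Type*} {n : ℕ}
    (α : E → (Fin n → F)) (a : E → F) (X : Finset E) : Prop :=
  ∃ x : Fin n → F, ∀ e ∈ X, (∑ i, α e i * x i) = a e

/-- The characteristic polynomial of the affine arrangement `𝒜_a`:
`χ(𝒜_a;t) = Σ_{X a-central} (−1)^{|X|} t^{n − dim span{(α_e, a(e)) : e ∈ X}}`. -/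
noncomputable def arrCharPoly {F : Type*} [Field F] {E : Type*} [Fintype E] {n : ℕ}
    (α : E → (Fin n → F)) (a : E → F) : Polynomial ℤ :=
  ∑ X ∈ (Finset.univ : Finset E).powerset.filter (fun X => ACentral α a X),
    (-1 : Polynomial ℤ) ^ X.card *
      Polynomial.X ^
        (n - Module.finrank F
          (Submodule.span F ((fun e => (α e, a e)) '' (X : Set E))))

/-- The `i`-th unsigned Whitney number of the first kind of the arrangement `𝒜_a`:
`w_i(𝒜_a) = (−1)^i ⋅ (coefficient of t^{n−i} in χ(𝒜_a;t))`. -/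
noncomputable def arrWhitney {F : Type*} [Field F] {E : Type*} [Fintype E] {n : ℕ}
    (α : E → (Fin n → F)) (a : E → F) (i : ℕ) : ℤ :=
  (-1 : ℤ) ^ i * (arrCharPoly α a).coeff (n - i)

section NBC

variable {F : Type*} [Field F] {E : Type*} {V : Type*} [AddCommGroup V] [Module F V]

/-- `e` lies in the closure of the elements of `X` which are larger than `e`. -/
def NbcAct (F : Type*) [Field F] {E : Type*} {V : Type*} [AddCommGroup V] [Module F V]
    (v : E → V) (r : E → ℕ) (X : Finset E) (e : E) : Prop :=
  v e ∈ Submodule.span F (v '' {f | f ∈ X ∧ r e < r f})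

/-- Toggle membership of `e` in `X`. -/
noncomputable def nbcTog (X : Finset E) (e : E) : Finset E :=
  if e ∈ X then X.erase e else insert e X

lemma mem_nbcTog_of_ne (X : Finset E) {e f : E} (hne : f ≠ e) : f ∈ nbcTog X e ↔ f ∈ X := by
  unfold nbcTog
  split_ifs <;> simp [hne]

lemma nbcTog_tog (X : Finset E) (e : E) : nbcTog (nbcTog X e) e = X := by
  unfold nbcTog
  by_cases he : e ∈ X <;> simp [he]

lemma nbcTog_ne (X : Finset E) (e : E) : nbcTog X e ≠ X := by
  unfold nbcTog
  by_cases he : e ∈ X <;> simp [he]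

lemma neg_one_pow_nbcTog (X : Finset E) (e : E) :
    (-1 : ℤ) ^ X.card + (-1 : ℤ) ^ (nbcTog X e).card = 0 := by
  unfold nbcTog
  by_cases he : e ∈ X
  · have h1 := Finset.card_erase_add_one he
    simp only [he, if_true]
    rw [← h1, pow_succ]; ring
  · simp only [he, if_false, Finset.card_insert_of_notMem he, pow_succ]; ring

lemma nbcAct_tog (v : E → V) (r : E → ℕ) (X : Finset E) {e f : E} (hef : r e ≤ r f) :
    NbcAct F v r (nbcTog X e) f ↔ NbcAct F v r X f := by
  have : {g | g ∈ nbcTog X e ∧ r f < r g} = {g | g ∈ X ∧ r f < r g} := by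
    ext g
    simp only [Set.mem_ofPred_eq]
    constructor
    · rintro ⟨h1, h2⟩
      have : g ≠ e := by rintro rfl; omega
      exact ⟨(mem_nbcTog_of_ne X this).1 h1, h2⟩
    · rintro ⟨h1, h2⟩
      have : g ≠ e := by rintro rfl; omega
      exact ⟨(mem_nbcTog_of_ne X this).2 h1, h2⟩
  unfold NbcAct
  rw [this]

lemma NbcAct.mem_span {v : E → V} {r : E → ℕ} {X : Finset E} {e : E}
    (h : NbcAct F v r X e) : v e ∈ Submodule.span F (v '' (X : Set E)) :=
  Submodule.span_mono (Set.image_mono (fun _ hf => hf.1)) h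

lemma nbcTog_subset (X : Finset E) (e : E) : nbcTog X e ⊆ insert e X := by
  intro f hf
  by_cases hne : f = e
  · simp [hne]
  · exact Finset.mem_insert_of_mem ((mem_nbcTog_of_ne X hne).1 hf)

lemma span_le_of_subset_insert {v : E → V} {X Y : Finset E} {e : E}
    (h : v e ∈ Submodule.span F (v '' (X : Set E))) (hY : Y ⊆ insert e X) :
    Submodule.span F (v '' (Y : Set E)) ≤ Submodule.span F (v '' (X : Set E)) := by
  rw [Submodule.span_le]
  rintro _ ⟨f, hf, rfl⟩
  rcases Finset.mem_insert.1 (hY hf) with rfl | h1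
  · exact h
  · exact Submodule.subset_span ⟨f, h1, rfl⟩

lemma NbcAct.span_tog {v : E → V} {r : E → ℕ} {X : Finset E} {e : E}
    (h : NbcAct F v r X e) :
    Submodule.span F (v '' (nbcTog X e : Set E)) = Submodule.span F (v '' (X : Set E)) := by
  apply le_antisymm
  · exact span_le_of_subset_insert h.mem_span (nbcTog_subset X e)
  · have h2 := (nbcAct_tog (F := F) v r X (le_refl (r e))).2 h
    refine span_le_of_subset_insert h2.mem_span ?_
    have := nbcTog_subset (nbcTog X e) e
    rwa [nbcTog_tog] at this

lemma nbc_exists_max [Fintype E] (v : E → V) (r : E → ℕ) (X : Finset E)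
    (h : ∃ e, NbcAct F v r X e) :
    ∃ e, NbcAct F v r X e ∧ ∀ f, NbcAct F v r X f → r f ≤ r e := by
  obtain ⟨e, he⟩ := h
  obtain ⟨m, hm, hm2⟩ := Finset.exists_max_image (Finset.univ.filter (NbcAct F v r X)) r
    ⟨e, by simpa using he⟩
  exact ⟨m, by simpa using hm, fun f hf => hm2 f (by simpa using hf)⟩

lemma nbc_sum [Fintype E] (v : E → V) (r : E → ℕ) (hr : Function.Injective r)
    (P : Finset E → Prop)
    (hP : ∀ X e, NbcAct F v r X e → P X → P (nbcTog X e)) :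
    ∑ X ∈ Finset.univ.filter P, (-1 : ℤ) ^ X.card =
      ∑ X ∈ Finset.univ.filter (fun X => P X ∧ ∀ e, ¬ NbcAct F v r X e), (-1 : ℤ) ^ X.card := by
  rw [← Finset.sum_filter_add_sum_filter_not (Finset.univ.filter P)
    (fun X => ∀ e, ¬ NbcAct F v r X e), Finset.filter_filter, Finset.filter_filter]
  rw [add_eq_left]
  have key : ∀ X ∈ Finset.univ.filter (fun X => P X ∧ ¬ ∀ e, ¬ NbcAct F v r X e),
      ∃ e, NbcAct F v r X e ∧ ∀ f, NbcAct F v r X f → r f ≤ r e := by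
    intro X hX
    simp only [Finset.mem_filter, Finset.mem_univ, true_and, not_forall, not_not] at hX
    exact nbc_exists_max v r X hX.2
  rcases isEmpty_or_nonempty E with hE | hE
  · refine Finset.sum_eq_zero fun X hX => ?_
    obtain ⟨e, -⟩ := key X hX
    exact hE.elim e
  choose! m hm using key
  have hmem : ∀ X (hX : X ∈ Finset.univ.filter (fun X => P X ∧ ¬ ∀ e, ¬ NbcAct F v r X e)),
      nbcTog X (m X) ∈ Finset.univ.filter (fun X => P X ∧ ¬ ∀ e, ¬ NbcAct F v r X e) := by
    intro X hX
    have h1 := (hm X hX).1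
    simp only [Finset.mem_filter, Finset.mem_univ, true_and, not_forall, not_not] at hX ⊢
    exact ⟨hP X _ h1 hX.1, m X, (nbcAct_tog v r X le_rfl).2 h1⟩
  refine Finset.sum_involution (fun X _ => nbcTog X (m X)) ?_ ?_ hmem ?_
  · intro X _; exact neg_one_pow_nbcTog X _
  · intro X _ _; exact nbcTog_ne X _
  · intro X hX
    have h1 := hm X hX
    have h2 := hm _ (hmem X hX)
    have h3 : r (m X) ≤ r (m (nbcTog X (m X))) := h2.2 _ ((nbcAct_tog v r X le_rfl).2 h1.1)
    have h4 : r (m (nbcTog X (m X))) ≤ r (m X) := h1.2 _ ((nbcAct_tog v r X h3).1 h2.1)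
    have h5 : m (nbcTog X (m X)) = m X := hr (le_antisymm h4 h3)
    simp only [h5, nbcTog_tog]

lemma nbc_indep (v : E → V) (r : E → ℕ) (hr : Function.Injective r) (X : Finset E)
    (h : ∀ e, ¬ NbcAct F v r X e) : LinearIndepOn F v (X : Set E) := by
  rw [linearIndepOn_finset_iff]
  intro c hc
  by_contra hcon
  push Not at hcon
  obtain ⟨e0, he0, hc0⟩ := hcon
  obtain ⟨e, he, hmin⟩ := Finset.exists_min_image (X.filter (fun e => c e ≠ 0)) r
    ⟨e0, by simp [he0, hc0]⟩
  simp only [Finset.mem_filter] at he hmin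
  apply h e
  rw [← Finset.add_sum_erase _ _ he.1] at hc
  have h1 : v e = (- (c e)⁻¹) • ∑ x ∈ X.erase e, c x • v x := by
    rw [eq_neg_of_add_eq_zero_right hc, neg_smul_neg, smul_smul, inv_mul_cancel₀ he.2, one_smul]
  unfold NbcAct
  rw [h1]
  refine Submodule.smul_mem _ _ (Submodule.sum_mem _ fun f hf => ?_)
  have hf' := Finset.mem_erase.1 hf
  by_cases hcf : c f = 0
  · simp [hcf]
  · refine Submodule.smul_mem _ _ (Submodule.subset_span ⟨f, ⟨hf'.2, ?_⟩, rfl⟩)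
    exact lt_of_le_of_ne (hmin f ⟨hf'.2, hcf⟩) (fun hh => hf'.1 (hr hh).symm)

end NBC

section Arr

variable {F : Type*} [Field F] {E : Type*} {n : ℕ}

/-- Pairing with `x`. -/
def arrPair (x : Fin n → F) : (Fin n → F) →ₗ[F] F where
  toFun p := ∑ i, p i * x i
  map_add' p q := by simp [add_mul, Finset.sum_add_distrib]
  map_smul' c p := by simp [Finset.mul_sum, mul_assoc]

lemma arrPair_apply (x p : Fin n → F) : arrPair x p = ∑ i, p i * x i := rfl

/-- The section `p ↦ (p, ⟨p, x⟩)`. -/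
def arrSec (x : Fin n → F) : (Fin n → F) →ₗ[F] (Fin n → F) × F :=
  LinearMap.prod LinearMap.id (arrPair x)

lemma arrSec_inj (x : Fin n → F) : LinearMap.ker (arrSec x) = ⊥ := by
  rw [LinearMap.ker_eq_bot]
  intro p q hpq
  exact congrArg Prod.fst hpq

lemma arrSec_image {α : E → (Fin n → F)} {a : E → F} {x : Fin n → F} {X : Set E}
    (hx : ∀ e ∈ X, (∑ i, α e i * x i) = a e) :
    (fun e => (α e, a e)) '' X = arrSec x '' (α '' X) := by
  rw [Set.image_image]
  apply Set.image_congr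
  intro e he
  simp [arrSec, arrPair_apply, hx e he]

lemma central_of_span {α : E → (Fin n → F)} {a : E → F} {X Y : Finset E}
    (hX : ACentral α a X)
    (hY : Submodule.span F ((fun e => (α e, a e)) '' (Y : Set E)) ≤
      Submodule.span F ((fun e => (α e, a e)) '' (X : Set E))) : ACentral α a Y := by
  obtain ⟨x, hx⟩ := hX
  refine ⟨x, fun e he => ?_⟩
  have h1 : Submodule.span F ((fun e => (α e, a e)) '' (X : Set E)) ≤
      LinearMap.ker ((arrPair x).comp (LinearMap.fst F _ F) - LinearMap.snd F _ F) := by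
    rw [Submodule.span_le]
    rintro _ ⟨f, hf, rfl⟩
    simp [arrPair_apply, hx f hf]
  have h2 := h1 (hY (Submodule.subset_span ⟨e, he, rfl⟩))
  simpa [arrPair_apply, sub_eq_zero] using h2

lemma central_rank {α : E → (Fin n → F)} {a : E → F} {X : Finset E}
    (hX : ACentral α a X) :
    Module.finrank F (Submodule.span F ((fun e => (α e, a e)) '' (X : Set E))) ≤ n := by
  obtain ⟨x, hx⟩ := hX
  rw [arrSec_image (X := (X : Set E)) hx, ← Submodule.map_span]
  refine (Submodule.finrank_map_le _ _).trans ?_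
  refine (Submodule.finrank_le _).trans ?_
  simp

lemma indep_of_central {α : E → (Fin n → F)} {a : E → F} {X : Finset E}
    (hX : ACentral α a X) (h : LinearIndepOn F (fun e => (α e, a e)) (X : Set E)) :
    LinearIndepOn F α (X : Set E) := by
  obtain ⟨x, hx⟩ := hX
  have h1 : LinearIndepOn F (arrSec x ∘ α) (X : Set E) := by
    refine h.congr ?_
    intro e he
    simp [arrSec, arrPair_apply, hx e he]
  exact LinearIndepOn.of_comp _ h1

lemma indep_pair {α : E → (Fin n → F)} {a : E → F} {X : Set E}
    (h : LinearIndepOn F α X) : LinearIndepOn F (fun e => (α e, a e)) X :=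
  LinearIndepOn.of_comp (LinearMap.fst F (Fin n → F) F) h

lemma central_of_indep {α : E → (Fin n → F)} (a : E → F) {X : Finset E}
    (h : LinearIndepOn F α (X : Set E)) : ACentral α a X := by
  replace h : LinearIndependent F (fun e : (X : Set E) => α e) := h
  obtain ⟨L, hL⟩ := LinearMap.exists_extend
    ((Module.Basis.span (v := fun e : (X : Set E) => α e) h).constr F (fun e : (X : Set E) => a e))
  refine ⟨fun i => L (Pi.single i 1), fun e he => ?_⟩
  have h1 : L (α e) = a e := by
    have h2 := LinearMap.congr_fun hL
      (Module.Basis.span (v := fun e : (X : Set E) => α e) h ⟨e, he⟩)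
    rw [Module.Basis.constr_basis] at h2
    rw [LinearMap.comp_apply, Submodule.subtype_apply, Module.Basis.span_apply] at h2
    exact h2
  rw [← h1]
  conv_rhs => rw [pi_eq_sum_univ (α e), map_sum]
  refine Finset.sum_congr rfl fun i _ => ?_
  rw [map_smul, smul_eq_mul]
  congr 1
  refine congrArg L (funext fun j => ?_)
  simp [Pi.single_apply, eq_comm]

/-- Central sets of rank `i`. -/
def ArrRk (α : E → (Fin n → F)) (a : E → F) (i : ℕ) (X : Finset E) : Prop :=
  ACentral α a X ∧
    Module.finrank F (Submodule.span F ((fun e => (α e, a e)) '' (X : Set E))) = i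

/-- The affine no-broken-circuit sets of rank `i`. -/
def ArrNbc (α : E → (Fin n → F)) (a : E → F) (r : E → ℕ) (i : ℕ) (X : Finset E) : Prop :=
  ArrRk α a i X ∧
  ∀ e, ¬ NbcAct F (fun e => (α e, a e)) r X e

lemma finrank_of_indep {V : Type*} [AddCommGroup V] [Module F V] {v : E → V} {X : Finset E}
    (h : LinearIndepOn F v (X : Set E)) :
    Module.finrank F (Submodule.span F (v '' (X : Set E))) = X.card := by
  have := finrank_span_eq_card (R := F) (b := fun e : (X : Set E) => v e) h
  rw [Set.image_eq_range]
  simpa using this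

lemma arrWhitney_eq [Fintype E] (α : E → (Fin n → F)) (a : E → F) (r : E → ℕ)
    (hr : Function.Injective r) (i : ℕ) (hi : i ≤ n) :
    arrWhitney α a i = ((Finset.univ.filter (ArrNbc α a r i)).card : ℤ) := by
  have h1 : (arrCharPoly α a).coeff (n - i) =
      ∑ X ∈ Finset.univ.filter (ArrRk α a i), (-1 : ℤ) ^ X.card := by
    have hf : Finset.univ.filter (ArrRk α a i) =
        (Finset.univ.filter (fun X => ACentral α a X)).filter (fun X : Finset E =>
        Module.finrank F (Submodule.span F ((fun e => (α e, a e)) '' (X : Set E))) = i) := by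
      ext X; simp [ArrRk]
    unfold arrCharPoly
    rw [Polynomial.finsetSum_coeff, Finset.powerset_univ, hf,
      Finset.sum_filter (s := Finset.univ.filter (fun X => ACentral α a X))]
    refine Finset.sum_congr rfl fun X hX => ?_
    have hc := central_rank (Finset.mem_filter.1 hX).2
    have : (-1 : Polynomial ℤ) ^ X.card = Polynomial.C ((-1 : ℤ) ^ X.card) := by simp
    rw [this, Polynomial.coeff_C_mul_X_pow]
    congr 1
    apply propext
    omega
  unfold arrWhitney
  rw [h1, nbc_sum (F := F) (fun e => (α e, a e)) r hr, Finset.mul_sum, Finset.card_eq_sum_ones,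
    Nat.cast_sum]
  · refine Finset.sum_congr (by ext X; simp [ArrNbc]) fun X hX => ?_
    have hX' := (Finset.mem_filter.1 hX).2
    have := finrank_of_indep (nbc_indep _ r hr X hX'.2)
    rw [← this, hX'.1.2, ← mul_pow]
    simp
  · rintro X e he ⟨h2, h3⟩
    have hs := he.span_tog
    exact ⟨central_of_span h2 hs.le, by rw [hs, h3]⟩

lemma ArrNbc.mono {α : E → (Fin n → F)} {a a' : E → F} {r : E → ℕ}
    (hr : Function.Injective r)
    (h : ∀ X : Finset E, ACentral α a' X → ACentral α a X) {i : ℕ} {X : Finset E}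
    (hX : ArrNbc α a r i X) : ArrNbc α a' r i X := by
  obtain ⟨⟨hc, hi⟩, hn⟩ := hX
  have hv := nbc_indep _ r hr X hn
  have hα := indep_of_central hc hv
  refine ⟨⟨central_of_indep a' hα, ?_⟩, fun e he => hn e ?_⟩
  · rw [finrank_of_indep (indep_pair hα), ← finrank_of_indep hv, hi]
  · set Y := X.filter (fun f => r e < r f) with hY
    have hYs : {f | f ∈ X ∧ r e < r f} = (Y : Set E) := by ext f; simp [hY]
    unfold NbcAct at he ⊢
    rw [hYs] at he ⊢
    have hYc : ACentral α a' Y :=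
      central_of_indep a' (hα.mono (by intro f hf; exact (Finset.mem_filter.1 hf).1))
    have hins : ACentral α a' (insert e Y) :=
      central_of_span hYc (span_le_of_subset_insert (v := fun e => (α e, a' e)) he
        (Finset.Subset.refl _))
    obtain ⟨x, hx⟩ := h _ hins
    have hαe : α e ∈ Submodule.span F (α '' (Y : Set E)) := by
      have := Submodule.mem_map_of_mem (f := LinearMap.fst F (Fin n → F) F) he
      rw [Submodule.map_span, Set.image_image] at this
      exact this
    rw [arrSec_image (x := x) (X := (Y : Set E))
      (fun f hf => hx f (Finset.mem_insert_of_mem hf)), ← Submodule.map_span]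
    refine ⟨α e, hαe, ?_⟩
    simp [arrSec, arrPair_apply, hx e (Finset.mem_insert_self _ _)]

end Arr

/-- If every `a'`-central subset is `a`-central, then
`w_i(𝒜_a) ≤ w_i(𝒜_{a'})` for all `0 ≤ i ≤ dim span{α_e : e ∈ E}`. -/
theorem arrWhitney_le_of_central_subset
    (F : Type*) [Field F] (E : Type*) [Fintype E] (n : ℕ) (hn : 0 < n)
    (α : E → (Fin n → F)) (a a' : E → F)
    (h : ∀ X : Finset E, ACentral α a' X → ACentral α a X)
    (i : ℕ) (hi : i ≤ Module.finrank F (Submodule.span F (Set.range α))) :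
    arrWhitney α a i ≤ arrWhitney α a' i := by
  have hin : i ≤ n := hi.trans ((Submodule.finrank_le _).trans (by simp))
  have hr : Function.Injective (fun e : E => ((Fintype.equivFin E e : Fin _) : ℕ)) :=
    fun x y hxy => (Fintype.equivFin E).injective (Fin.ext hxy)
  rw [arrWhitney_eq α a _ hr i hin, arrWhitney_eq α a' _ hr i hin]
  exact_mod_cast Finset.card_le_card
    (Finset.monotone_filter_right _ (fun X _ hX => ArrNbc.mono hr h hX))
end
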